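/- arXiv:2101.06857 — 2 statements merged into one kernel-verified Lean document; each statement's English description precedes it below -/
import Mathlib

section
/- Let Λ and Γ be g-fusion frames for H and K with g-fusion frame operators S_Λ and S_Γ respectively. Then the g-fusion frame operator of the tensor product family Λ ⊗ Γ satisfies S_{Λ⊗Γ} = S_Λ ⊗ S_Γ; that is, for all f ∈ H, g ∈ K, Σ_{i,j} v_i² w_j² P_{V_i ⊗ W_j}(Λ_i ⊗ Γ_j)*(Λ_i ⊗ Γ_j)P_{V_i ⊗ W_j}(f ⊗ g) = S_Λ f ⊗ S_Γ g. -/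
noncomputable section

open Submodule ContinuousLinearMap

local notation "⟪" x ", " y "⟫" => @inner ℂ _ _ x y

/-- An abstract realization of the Hilbert-space tensor product of `H` and `K`:
a map `tmul : H → K → E` whose inner products multiply and whose elementary
tensors have dense span. -/
structure HilbertTensor (H K E : Type*) [NormedAddCommGroup H] [InnerProductSpace ℂ H]
    [NormedAddCommGroup K] [InnerProductSpace ℂ K]
    [NormedAddCommGroup E] [InnerProductSpace ℂ E] where
  tmul : H → K → E
  inner_tmul : ∀ (f f' : H) (g g' : K),
    ⟪tmul f g, tmul f' g'⟫ = ⟪f, f'⟫ * ⟪g, g'⟫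
  dense_span : Dense (Submodule.span ℂ (Set.range fun p : H × K => tmul p.1 p.2) : Set E)

variable {H K E H' K' E' : Type*}
variable [NormedAddCommGroup H] [InnerProductSpace ℂ H]
variable [NormedAddCommGroup K] [InnerProductSpace ℂ K]
variable [NormedAddCommGroup E] [InnerProductSpace ℂ E]
variable [NormedAddCommGroup H'] [InnerProductSpace ℂ H']
variable [NormedAddCommGroup K'] [InnerProductSpace ℂ K']
variable [NormedAddCommGroup E'] [InnerProductSpace ℂ E']

/-- The orthogonal projection onto a (closed) subspace, as an operator `H →L[ℂ] H`. -/
def projL (V : Submodule ℂ H) [HasOrthogonalProjection V] : H →L[ℂ] H :=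
  V.subtypeL.comp (orthogonalProjection V)

/-- `R` is the tensor product operator `Q ⊗ T`, i.e. it is determined on elementary
tensors by `(Q ⊗ T)(f ⊗ g) = Qf ⊗ Tg`. -/
def IsTensorOp (tp : HilbertTensor H K E) (tp' : HilbertTensor H' K' E')
    (Q : H →L[ℂ] H') (T : K →L[ℂ] K') (R : E →L[ℂ] E') : Prop :=
  ∀ (f : H) (g : K), R (tp.tmul f g) = tp'.tmul (Q f) (T g)

/-- The tensor product `V ⊗ W` of subspaces: the closure of the span of elementary
tensors of elements of `V` and `W`. -/
def tsub (tp : HilbertTensor H K E) (V : Submodule ℂ H) (W : Submodule ℂ K) : Submodule ℂ E :=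
  (Submodule.span ℂ {x : E | ∃ f ∈ V, ∃ g ∈ W, x = tp.tmul f g}).topologicalClosure

/-- `{(V i, Λ i, v i)}` is a g-fusion Bessel sequence in `H` with bound `B`. -/
def IsGFusionBessel {ι : Type*} {Hi : ι → Type*}
    [∀ i, NormedAddCommGroup (Hi i)] [∀ i, InnerProductSpace ℂ (Hi i)]
    (V : ι → Submodule ℂ H) [∀ i, HasOrthogonalProjection (V i)]
    (Λ : ∀ i, H →L[ℂ] Hi i) (v : ι → ℝ) (B : ℝ) : Prop :=
  (∀ i, 0 < v i) ∧ 0 < B ∧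
    ∀ f : H, ∑' i, (v i) ^ 2 * ‖Λ i (projL (V i) f)‖ ^ 2 ≤ B * ‖f‖ ^ 2

/-- `{(V i, Λ i, v i)}` is a g-fusion frame for `H` with bounds `A ≤ B`. -/
def IsGFusionFrame {ι : Type*} {Hi : ι → Type*}
    [∀ i, NormedAddCommGroup (Hi i)] [∀ i, InnerProductSpace ℂ (Hi i)]
    (V : ι → Submodule ℂ H) [∀ i, HasOrthogonalProjection (V i)]
    (Λ : ∀ i, H →L[ℂ] Hi i) (v : ι → ℝ) (A B : ℝ) : Prop :=
  (∀ i, 0 < v i) ∧ 0 < A ∧ A ≤ B ∧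
    ∀ f : H, A * ‖f‖ ^ 2 ≤ ∑' i, (v i) ^ 2 * ‖Λ i (projL (V i) f)‖ ^ 2 ∧
      ∑' i, (v i) ^ 2 * ‖Λ i (projL (V i) f)‖ ^ 2 ≤ B * ‖f‖ ^ 2

open Matrix ComplexOrder in
theorem aux_posSemidef_sum {n : Type*} [Fintype n] {M N : Matrix n n ℂ}
    (hM : M.PosSemidef) (hN : N.PosSemidef) :
    0 ≤ (∑ a, ∑ b, M a b * N a b).re := by
  have h := (hM.hadamard hN).dotProduct_mulVec_nonneg (fun _ => 1)
  have h2 := (Complex.le_def.1 h).1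
  simpa [dotProduct, mulVec, Matrix.hadamard] using h2

open Matrix ComplexOrder in
theorem aux_gram_sub {H : Type*} [NormedAddCommGroup H] [InnerProductSpace ℂ H]
    {n ι : Type*} [Fintype n] {G : ι → Type*}
    [∀ i, NormedAddCommGroup (G i)] [∀ i, InnerProductSpace ℂ (G i)]
    (T : ∀ i, H →L[ℂ] G i) (B : ℝ) (F : Finset ι)
    (hT : ∀ f : H, ∑ i ∈ F, ‖T i f‖ ^ 2 ≤ B * ‖f‖ ^ 2) (f : n → H) :
    (((B : ℂ) • gram ℂ f) - ∑ i ∈ F, gram ℂ (fun a => T i (f a))).PosSemidef := by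
  refine .of_dotProduct_mulVec_nonneg ?_ fun x => ?_
  · refine Matrix.IsHermitian.sub ?_ ?_
    · ext a b
      simp [gram]
    · ext a b
      simp [gram, Matrix.sum_apply]
  · have e : star x ⬝ᵥ ((((B : ℂ) • gram ℂ f) - ∑ i ∈ F, gram ℂ (fun a => T i (f a))) *ᵥ x)
        = ((B * ‖∑ a, x a • f a‖ ^ 2 - ∑ i ∈ F, ‖T i (∑ a, x a • f a)‖ ^ 2 : ℝ) : ℂ) := by
      rw [sub_mulVec, dotProduct_sub, smul_mulVec, dotProduct_smul, sum_mulVec, dotProduct_sum,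
        star_dotProduct_gram_mulVec]
      simp only [star_dotProduct_gram_mulVec, inner_self_eq_norm_sq_to_K]
      push_cast
      simp [map_sum]
    rw [e]
    exact_mod_cast sub_nonneg.2 (hT _)

theorem aux_norm_sum_tmul {n : Type*} [Fintype n] (tp : HilbertTensor H K E)
    (f : n → H) (g : n → K) :
    ‖∑ a, tp.tmul (f a) (g a)‖ ^ 2
      = (∑ a, ∑ b, Matrix.gram ℂ f a b * Matrix.gram ℂ g a b).re := by
  have := inner_self_eq_norm_sq_to_K (𝕜 := ℂ) (∑ a, tp.tmul (f a) (g a))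
  rw [sum_inner] at this
  simp only [inner_sum, tp.inner_tmul] at this
  simp only [Matrix.gram, Matrix.of_apply]
  rw [this]
  norm_cast

open ComplexOrder in
theorem aux_bessel_finite {n ι κ : Type*} [Fintype n]
    {G : ι → Type*} [∀ i, NormedAddCommGroup (G i)] [∀ i, InnerProductSpace ℂ (G i)]
    {L : κ → Type*} [∀ i, NormedAddCommGroup (L i)] [∀ i, InnerProductSpace ℂ (L i)]
    {Q : ι → κ → Type*} [∀ i j, NormedAddCommGroup (Q i j)] [∀ i j, InnerProductSpace ℂ (Q i j)]
    (tp : HilbertTensor H K E) (tq : ∀ i j, HilbertTensor (G i) (L j) (Q i j))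
    (T : ∀ i, H →L[ℂ] G i) (U : ∀ i, K →L[ℂ] L i) (B D : ℝ) (hD : 0 ≤ D)
    (F : Finset ι) (F' : Finset κ)
    (hT : ∀ f : H, ∑ i ∈ F, ‖T i f‖ ^ 2 ≤ B * ‖f‖ ^ 2)
    (hU : ∀ f : K, ∑ i ∈ F', ‖U i f‖ ^ 2 ≤ D * ‖f‖ ^ 2)
    (f : n → H) (g : n → K) :
    ∑ i ∈ F, ∑ j ∈ F', ‖∑ a, (tq i j).tmul (T i (f a)) (U j (g a))‖ ^ 2
      ≤ (B * D) * ‖∑ a, tp.tmul (f a) (g a)‖ ^ 2 := by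
  simp only [aux_norm_sum_tmul]
  have hG : (Matrix.gram ℂ g).PosSemidef := Matrix.posSemidef_gram ℂ g
  have h1 := aux_posSemidef_sum (aux_gram_sub T B F hT f) hG
  have hS : (∑ i ∈ F, Matrix.gram ℂ (fun a => T i (f a))).PosSemidef :=
    Matrix.posSemidef_sum _ fun i _ => Matrix.posSemidef_gram ℂ _
  have h2 := aux_posSemidef_sum hS (aux_gram_sub U D F' hU g)
  have e : ∑ i ∈ F, ∑ j ∈ F', (∑ a, ∑ b, Matrix.gram ℂ (fun a => T i (f a)) a b *
        Matrix.gram ℂ (fun a => U j (g a)) a b).re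
      = (∑ a, ∑ b, (∑ i ∈ F, Matrix.gram ℂ (fun a => T i (f a))) a b *
        (∑ j ∈ F', Matrix.gram ℂ (fun a => U j (g a))) a b).re := by
    simp only [← Complex.re_sum, Matrix.sum_apply, Finset.sum_mul_sum]
    congr 1
    rw [Finset.sum_congr rfl fun i _ => Finset.sum_comm, Finset.sum_comm]
    refine Finset.sum_congr rfl fun a _ => ?_
    rw [Finset.sum_congr rfl fun i _ => Finset.sum_comm, Finset.sum_comm]
  rw [e]
  simp only [Matrix.sub_apply, Matrix.smul_apply, sub_mul, mul_sub, Finset.sum_sub_distrib,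
    Complex.sub_re, smul_eq_mul, mul_assoc, mul_left_comm _ (D : ℂ), ← Finset.mul_sum,
    Complex.re_ofReal_mul] at h1 h2
  nlinarith [mul_nonneg hD h1]

theorem aux_summable {H : Type*} [NormedAddCommGroup H] [InnerProductSpace ℂ H] [CompleteSpace H]
    {ι : Type*} {G : ι → Type*}
    [∀ i, NormedAddCommGroup (G i)] [∀ i, InnerProductSpace ℂ (G i)] [∀ i, CompleteSpace (G i)]
    (T : ∀ i, H →L[ℂ] G i) (B : ℝ) (hB : 0 ≤ B)
    (hT : ∀ (F : Finset ι) (f : H), ∑ i ∈ F, ‖T i f‖ ^ 2 ≤ B * ‖f‖ ^ 2) (f : H) :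
    Summable fun i => ContinuousLinearMap.adjoint (T i) (T i f) := by
  have key : ∀ F : Finset ι, ‖∑ i ∈ F, ContinuousLinearMap.adjoint (T i) (T i f)‖ ^ 2
      ≤ B * ∑ i ∈ F, ‖T i f‖ ^ 2 := by
    intro F
    set y := ∑ i ∈ F, ContinuousLinearMap.adjoint (T i) (T i f) with hy
    have h1 : ‖y‖ ^ 2 ≤ ∑ i ∈ F, ‖T i f‖ * ‖T i y‖ := by
      have h0 : ‖y‖ ^ 2 = (∑ i ∈ F, ⟪T i f, T i y⟫).re := by
        have := inner_self_eq_norm_sq_to_K (𝕜 := ℂ) y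
        conv at this => lhs; lhs; rw [hy]
        rw [sum_inner] at this
        simp only [ContinuousLinearMap.adjoint_inner_left] at this
        rw [this]
        norm_cast
      rw [h0, Complex.re_sum]
      exact Finset.sum_le_sum fun i _ => (Complex.re_le_norm _).trans (norm_inner_le_norm _ _)
    have h2 := Finset.sum_mul_sq_le_sq_mul_sq F (fun i => ‖T i f‖) (fun i => ‖T i y‖)
    have h3 := hT F y
    have h4 : 0 ≤ ∑ i ∈ F, ‖T i f‖ ^ 2 := Finset.sum_nonneg fun i _ => by positivity
    have h5 : (‖y‖ ^ 2) ^ 2 ≤ (∑ i ∈ F, ‖T i f‖ * ‖T i y‖) ^ 2 := by gcongr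
    have h6 := mul_le_mul_of_nonneg_left h3 h4
    rcases eq_or_lt_of_le (sq_nonneg ‖y‖) with h | h
    · rw [← h]; positivity
    · refine le_of_mul_le_mul_right ?_ h
      nlinarith
  have hs : Summable fun i => ‖T i f‖ ^ 2 :=
    summable_of_sum_le (fun i => by positivity) fun F => hT F f
  rw [summable_iff_vanishing_norm]
  intro ε hε
  obtain ⟨s, hs⟩ := summable_iff_vanishing_norm.1 hs (ε ^ 2 / (B + 1)) (by positivity)
  refine ⟨s, fun t ht => ?_⟩
  have h1 := hs t ht
  rw [Real.norm_of_nonneg (Finset.sum_nonneg fun i _ => by positivity),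
    lt_div_iff₀ (by positivity)] at h1
  have h2 := key t
  have h4 : 0 ≤ ∑ i ∈ t, ‖T i f‖ ^ 2 := Finset.sum_nonneg fun i _ => by positivity
  refine lt_of_pow_lt_pow_left₀ 2 hε.le ?_
  nlinarith

theorem aux_ext (tp : HilbertTensor H K E) {x y : E}
    (h : ∀ f g, ⟪x, tp.tmul f g⟫ = ⟪y, tp.tmul f g⟫) : x = y := by
  refine Dense.eq_of_inner_left (𝕜 := ℂ) tp.dense_span fun z hz => ?_
  induction hz using Submodule.span_induction with
  | mem z hz => obtain ⟨p, rfl⟩ := hz; exact h _ _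
  | zero => simp
  | add a b _ _ ha hb => rw [inner_add_right, inner_add_right, ha, hb]
  | smul c a _ ha => rw [inner_smul_right, inner_smul_right, ha]

theorem aux_norm_tmul (tp : HilbertTensor H K E) (f : H) (g : K) :
    ‖tp.tmul f g‖ = ‖f‖ * ‖g‖ := by
  have h := tp.inner_tmul f f g g
  simp only [inner_self_eq_norm_sq_to_K] at h
  have h' : ‖tp.tmul f g‖ ^ 2 = (‖f‖ * ‖g‖) ^ 2 := by
    rw [mul_pow]; exact_mod_cast h
  exact (pow_left_inj₀ (by positivity) (by positivity) two_ne_zero).1 h'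

/-- left multiplication -/
def auxL (tp : HilbertTensor H K E) (f : H) : K →L[ℂ] E :=
  LinearMap.mkContinuous
    { toFun := tp.tmul f
      map_add' := fun a b => aux_ext tp fun f g => by
        simp [inner_add_left, tp.inner_tmul, mul_add]
      map_smul' := fun c a => aux_ext tp fun f g => by
        simp only [inner_smul_left, tp.inner_tmul, RingHom.id_apply]; ring } ‖f‖
    fun g => (aux_norm_tmul tp f g).le

/-- right multiplication -/
def auxR (tp : HilbertTensor H K E) (g : K) : H →L[ℂ] E :=
  LinearMap.mkContinuous
    { toFun := fun f => tp.tmul f g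
      map_add' := fun a b => aux_ext tp fun f g => by
        simp [inner_add_left, tp.inner_tmul, add_mul]
      map_smul' := fun c a => aux_ext tp fun f g => by
        simp only [inner_smul_left, tp.inner_tmul, RingHom.id_apply]; ring } ‖g‖
    fun f => (aux_norm_tmul tp f g).le.trans (mul_comm _ _).le

theorem auxL_apply (tp : HilbertTensor H K E) (f : H) (g : K) : auxL tp f g = tp.tmul f g := rfl
theorem auxR_apply (tp : HilbertTensor H K E) (f : H) (g : K) : auxR tp g f = tp.tmul f g := rfl

theorem aux_proj_inner (V : Submodule ℂ H) [HasOrthogonalProjection V] (f v : H) (hv : v ∈ V) :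
    ⟪v, projL V f⟫ = ⟪v, f⟫ := by
  have : f - projL V f ∈ Vᗮ := V.sub_starProjection_mem_orthogonal f
  have h := (Submodule.mem_orthogonal V _).1 this v hv
  rw [inner_sub_right, sub_eq_zero] at h
  exact h.symm

theorem aux_proj_tmul (tp : HilbertTensor H K E) (V : Submodule ℂ H) (W : Submodule ℂ K)
    [HasOrthogonalProjection V] [HasOrthogonalProjection W]
    [HasOrthogonalProjection (tsub tp V W)] (f : H) (g : K) :
    projL (tsub tp V W) (tp.tmul f g) = tp.tmul (projL V f) (projL W g) := by
  refine Submodule.eq_starProjection_of_mem_orthogonal (K := tsub tp V W) ?_ ?_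
  · refine Submodule.le_topologicalClosure _ (Submodule.subset_span ?_)
    exact ⟨_, (orthogonalProjection V f).2, _, (orthogonalProjection W g).2, rfl⟩
  · rw [tsub, Submodule.orthogonal_closure, Submodule.mem_orthogonal]
    intro z hz
    induction hz using Submodule.span_induction with
    | mem z hz =>
      obtain ⟨a, ha, b, hb, rfl⟩ := hz
      rw [inner_sub_right, tp.inner_tmul, tp.inner_tmul, aux_proj_inner V f a ha,
        aux_proj_inner W g b hb, sub_self]
    | zero => simp
    | add a b _ _ ha hb => rw [inner_add_left, ha, hb, add_zero]
    | smul c a _ ha => rw [inner_smul_left, ha, mul_zero]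

theorem aux_adj_tmul [CompleteSpace H] [CompleteSpace K] [CompleteSpace E]
    [CompleteSpace H'] [CompleteSpace K'] [CompleteSpace E']
    (tp : HilbertTensor H K E) (tp' : HilbertTensor H' K' E')
    (Q : H →L[ℂ] H') (T : K →L[ℂ] K') (R : E →L[ℂ] E') (h : IsTensorOp tp tp' Q T R)
    (a : H') (b : K') :
    ContinuousLinearMap.adjoint R (tp'.tmul a b)
      = tp.tmul (ContinuousLinearMap.adjoint Q a) (ContinuousLinearMap.adjoint T b) := by
  refine aux_ext tp fun f g => ?_
  rw [ContinuousLinearMap.adjoint_inner_left, h, tp.inner_tmul, tp'.inner_tmul,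
    ContinuousLinearMap.adjoint_inner_left, ContinuousLinearMap.adjoint_inner_left]

/-- the scaled analysis operator -/
def auxT (V : Submodule ℂ H) [HasOrthogonalProjection V] (Λ : H →L[ℂ] H') (v : ℝ) : H →L[ℂ] H' :=
  (v : ℂ) • (Λ ∘L projL V)

theorem auxT_apply (V : Submodule ℂ H) [HasOrthogonalProjection V] (Λ : H →L[ℂ] H') (v : ℝ)
    (f : H) : auxT V Λ v f = (v : ℂ) • Λ (projL V f) := rfl

theorem auxT_norm (V : Submodule ℂ H) [HasOrthogonalProjection V] (Λ : H →L[ℂ] H') (v : ℝ)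
    (f : H) : ‖auxT V Λ v f‖ ^ 2 = v ^ 2 * ‖Λ (projL V f)‖ ^ 2 := by
  rw [auxT_apply, norm_smul, mul_pow]; simp

theorem auxT_adj [CompleteSpace H] [CompleteSpace H']
    (V : Submodule ℂ H) [HasOrthogonalProjection V] (Λ : H →L[ℂ] H') (v : ℝ) (f : H) :
    ContinuousLinearMap.adjoint (auxT V Λ v) (auxT V Λ v f)
      = (v ^ 2 : ℝ) • projL V (ContinuousLinearMap.adjoint Λ (Λ (projL V f))) := by
  have hP : ContinuousLinearMap.adjoint (projL V) = projL V :=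
    (isSelfAdjoint_starProjection V).adjoint_eq
  have h : ContinuousLinearMap.adjoint (auxT V Λ v)
      = (v : ℂ) • (projL V ∘L ContinuousLinearMap.adjoint Λ) := by
    rw [auxT, map_smulₛₗ, ContinuousLinearMap.adjoint_comp, hP]
    simp
  rw [h, auxT_apply]
  simp only [ContinuousLinearMap.smul_apply, ContinuousLinearMap.comp_apply, map_smul, smul_smul]
  rw [← Complex.coe_smul]
  push_cast
  rw [sq]

theorem aux_frame_bessel {ι : Type*} {Hi : ι → Type*}
    [∀ i, NormedAddCommGroup (Hi i)] [∀ i, InnerProductSpace ℂ (Hi i)]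
    (V : ι → Submodule ℂ H) [∀ i, HasOrthogonalProjection (V i)]
    (Λ : ∀ i, H →L[ℂ] Hi i) (v : ι → ℝ) (A B : ℝ) (h : IsGFusionFrame V Λ v A B)
    (F : Finset ι) (f : H) : ∑ i ∈ F, ‖auxT (V i) (Λ i) (v i) f‖ ^ 2 ≤ B * ‖f‖ ^ 2 := by
  obtain ⟨_, hA, _, hf⟩ := h
  simp only [auxT_norm]
  by_cases h0 : f = 0
  · simp [h0]
  have hs : Summable fun i => (v i) ^ 2 * ‖Λ i (projL (V i) f)‖ ^ 2 := by
    by_contra hn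
    have := (hf f).1
    rw [tsum_eq_zero_of_not_summable hn] at this
    have : 0 < A * ‖f‖ ^ 2 := by positivity
    linarith
  exact (hs.sum_le_tsum F fun i _ => by positivity).trans (hf f).2

theorem aux_bessel {ι κ : Type*}
    {G : ι → Type*} [∀ i, NormedAddCommGroup (G i)] [∀ i, InnerProductSpace ℂ (G i)]
    {L : κ → Type*} [∀ i, NormedAddCommGroup (L i)] [∀ i, InnerProductSpace ℂ (L i)]
    {Q : ι → κ → Type*} [∀ i j, NormedAddCommGroup (Q i j)] [∀ i j, InnerProductSpace ℂ (Q i j)]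
    (tp : HilbertTensor H K E) (tq : ∀ i j, HilbertTensor (G i) (L j) (Q i j))
    (T : ∀ i, H →L[ℂ] G i) (U : ∀ i, K →L[ℂ] L i) (B D : ℝ) (hD : 0 ≤ D)
    (hT : ∀ (F : Finset ι) (f : H), ∑ i ∈ F, ‖T i f‖ ^ 2 ≤ B * ‖f‖ ^ 2)
    (hU : ∀ (F : Finset κ) (f : K), ∑ i ∈ F, ‖U i f‖ ^ 2 ≤ D * ‖f‖ ^ 2)
    (R : ∀ p : ι × κ, E →L[ℂ] Q p.1 p.2)
    (hR : ∀ p : ι × κ, IsTensorOp tp (tq p.1 p.2) (T p.1) (U p.2) (R p))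
    (F : Finset (ι × κ)) (x : E) : ∑ p ∈ F, ‖R p x‖ ^ 2 ≤ (B * D) * ‖x‖ ^ 2 := by
  classical
  have hc : IsClosed {x : E | ∑ p ∈ F, ‖R p x‖ ^ 2 ≤ (B * D) * ‖x‖ ^ 2} :=
    isClosed_le (by fun_prop) (by fun_prop)
  refine hc.closure_subset_iff.2 ?_ (tp.dense_span x)
  intro z hz
  obtain ⟨n, c, q, rfl⟩ := Submodule.mem_span_set'.1 hz
  choose a ha using fun i => (q i).2
  have e : ∑ i, c i • (q i : E) = ∑ i, tp.tmul (c i • (a i).1) (a i).2 := by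
    refine Finset.sum_congr rfl fun i _ => ?_
    rw [← auxR_apply, map_smul, auxR_apply, ← ha i]
  rw [Set.mem_setOf_eq, e]
  refine le_trans ?_ (aux_bessel_finite tp tq T U B D hD (F.image Prod.fst) (F.image Prod.snd)
    (hT _) (hU _) _ _)
  rw [← Finset.sum_product']
  refine le_trans (Finset.sum_le_sum_of_subset_of_nonneg
    (t := F.image Prod.fst ×ˢ F.image Prod.snd) ?_ fun p _ _ => by positivity) ?_
  · exact Finset.subset_product
  · refine Finset.sum_le_sum fun p _ => ?_
    rw [map_sum]
    simp only [hR p _ _]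
    exact le_rfl

/-- `S_{Λ⊗Γ} = S_Λ ⊗ S_Γ`. -/
theorem stmt_9 {ι κ : Type*} [CompleteSpace H] [CompleteSpace K] [CompleteSpace E]
    {Hi : ι → Type*} [∀ i, NormedAddCommGroup (Hi i)] [∀ i, InnerProductSpace ℂ (Hi i)]
    [∀ i, CompleteSpace (Hi i)]
    {Kj : κ → Type*} [∀ j, NormedAddCommGroup (Kj j)] [∀ j, InnerProductSpace ℂ (Kj j)]
    [∀ j, CompleteSpace (Kj j)]
    {Eij : ι → κ → Type*} [∀ i j, NormedAddCommGroup (Eij i j)]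
    [∀ i j, InnerProductSpace ℂ (Eij i j)] [∀ i j, CompleteSpace (Eij i j)]
    (tp : HilbertTensor H K E) (tpij : ∀ i j, HilbertTensor (Hi i) (Kj j) (Eij i j))
    (V : ι → Submodule ℂ H) [∀ i, HasOrthogonalProjection (V i)]
    (W : κ → Submodule ℂ K) [∀ j, HasOrthogonalProjection (W j)]
    [∀ i j, HasOrthogonalProjection (tsub tp (V i) (W j))]
    (Λ : ∀ i, H →L[ℂ] Hi i) (Γ : ∀ j, K →L[ℂ] Kj j)
    (v : ι → ℝ) (w : κ → ℝ) (A B C D : ℝ)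
    (hΛ : IsGFusionFrame V Λ v A B) (hΓ : IsGFusionFrame W Γ w C D)
    (Rij : ∀ i j, E →L[ℂ] Eij i j)
    (hRij : ∀ i j, IsTensorOp tp (tpij i j) (Λ i) (Γ j) (Rij i j))
    (SΛ : H →L[ℂ] H) (SΓ : K →L[ℂ] K)
    (hSΛ : ∀ f : H, SΛ f = ∑' i, ((v i) ^ 2 : ℝ) •
      projL (V i) (ContinuousLinearMap.adjoint (Λ i) (Λ i (projL (V i) f))))
    (hSΓ : ∀ g : K, SΓ g = ∑' j, ((w j) ^ 2 : ℝ) •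
      projL (W j) (ContinuousLinearMap.adjoint (Γ j) (Γ j (projL (W j) g)))) :
    ∀ (f : H) (g : K),
      (∑' p : ι × κ, ((v p.1 * w p.2) ^ 2 : ℝ) •
        projL (tsub tp (V p.1) (W p.2))
          (ContinuousLinearMap.adjoint (Rij p.1 p.2)
            (Rij p.1 p.2 (projL (tsub tp (V p.1) (W p.2)) (tp.tmul f g))))) =
      tp.tmul (SΛ f) (SΓ g) := by
  intro f g
  have hB := aux_frame_bessel V Λ v A B hΛ
  have hD := aux_frame_bessel W Γ w C D hΓ
  have hB0 : 0 ≤ B := hΛ.2.1.le.trans hΛ.2.2.1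
  have hD0 : 0 ≤ D := hΓ.2.1.le.trans hΓ.2.2.1
  let R : ∀ p : ι × κ, E →L[ℂ] Eij p.1 p.2 := fun p =>
    auxT (tsub tp (V p.1) (W p.2)) (Rij p.1 p.2) (v p.1 * w p.2)
  have hR : ∀ p : ι × κ, IsTensorOp tp (tpij p.1 p.2) (auxT (V p.1) (Λ p.1) (v p.1))
      (auxT (W p.2) (Γ p.2) (w p.2)) (R p) := by
    intro p f g
    simp only [R, auxT_apply]
    rw [aux_proj_tmul, hRij, ← auxL_apply (tpij p.1 p.2) _ (_ • _), map_smul, auxL_apply,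
      ← auxR_apply (tpij p.1 p.2) (_ • _), map_smul, auxR_apply, smul_smul]
    push_cast
    rw [mul_comm]
  have hbes := aux_bessel tp tpij (fun i => auxT (V i) (Λ i) (v i))
    (fun j => auxT (W j) (Γ j) (w j)) B D hD0 hB hD R hR
  have hsum := aux_summable R (B * D) (mul_nonneg hB0 hD0) hbes (tp.tmul f g)
  have h1 := aux_summable (fun i => auxT (V i) (Λ i) (v i)) B hB0 hB f
  have h2 := aux_summable (fun j => auxT (W j) (Γ j) (w j)) D hD0 hD g
  rw [hSΛ, hSΓ]
  simp only [← auxT_adj]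
  change ∑' p, ContinuousLinearMap.adjoint (R p) (R p (tp.tmul f g)) = _
  have e : ∀ p : ι × κ, ContinuousLinearMap.adjoint (R p) (R p (tp.tmul f g)) = tp.tmul
      (ContinuousLinearMap.adjoint (auxT (V p.1) (Λ p.1) (v p.1)) (auxT (V p.1) (Λ p.1) (v p.1) f))
      (ContinuousLinearMap.adjoint (auxT (W p.2) (Γ p.2) (w p.2))
        (auxT (W p.2) (Γ p.2) (w p.2) g)) := fun p => by
    rw [hR p, aux_adj_tmul _ _ _ _ _ (hR p)]
  rw [funext e] at hsum ⊢
  rw [hsum.tsum_prod, ← auxR_apply, ContinuousLinearMap.map_tsum _ h1]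
  refine tsum_congr fun i => ?_
  rw [auxR_apply, ← auxL_apply, ContinuousLinearMap.map_tsum _ h2]
  rfl
end
end

section
/- Let (Λ, Λ') be a pair of g-fusion Bessel sequences in H with frame operator S_{ΛΛ'} and (Γ, Γ') a pair of g-fusion Bessel sequences in K with frame operator S_{ΓΓ'}. Then the frame operator S of the pair of tensor product g-fusion Bessel sequences (Λ ⊗ Γ, Λ' ⊗ Γ') satisfies S = S_{ΛΛ'} ⊗ S_{ΓΓ'}. -/
noncomputable section

open Submodule ContinuousLinearMap

local notation "⟪" x ", " y "⟫" => @inner ℂ _ _ x y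

variable {H K E H' K' E' : Type*}
variable [NormedAddCommGroup H] [InnerProductSpace ℂ H]
variable [NormedAddCommGroup K] [InnerProductSpace ℂ K]
variable [NormedAddCommGroup E] [InnerProductSpace ℂ E]
variable [NormedAddCommGroup H'] [InnerProductSpace ℂ H']
variable [NormedAddCommGroup K'] [InnerProductSpace ℂ K']
variable [NormedAddCommGroup E'] [InnerProductSpace ℂ E']

/-! Rademacher averages -/
def rad {X : Type*} [AddCommGroup X] : List X → (X → ℝ) → X → ℝ
  | [], φ, x => φ x
  | a :: l, φ, x => (rad l φ (x + a) + rad l φ (x - a)) / 2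

theorem rad_mono {X : Type*} [AddCommGroup X] (l : List X) {φ ψ : X → ℝ}
    (h : ∀ y, φ y ≤ ψ y) : ∀ x, rad l φ x ≤ rad l ψ x := by
  induction l with
  | nil => intro x; exact h x
  | cons a l ih => intro x; simp only [rad]; linarith [ih (x + a), ih (x - a)]

theorem rad_const {X : Type*} [AddCommGroup X] (l : List X) (c : ℝ) :
    ∀ x, rad l (fun _ => c) x = c := by
  induction l with
  | nil => intro x; rfl
  | cons a l ih => intro x; simp only [rad, ih]; ring

theorem rad_lin {X : Type*} [AddCommGroup X] (l : List X) (φ ψ : X → ℝ) (c d : ℝ) :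
    ∀ x, rad l (fun y => c * φ y + d * ψ y) x = c * rad l φ x + d * rad l ψ x := by
  induction l with
  | nil => intro x; rfl
  | cons a l ih => intro x; simp only [rad, ih]; ring

theorem rad_sum {X α : Type*} [AddCommGroup X] (l : List X) (s : Finset α) (φ : α → X → ℝ) :
    ∀ x, rad l (fun y => ∑ i ∈ s, φ i y) x = ∑ i ∈ s, rad l (φ i) x := by
  induction l with
  | nil => intro x; rfl
  | cons a l ih =>
    intro x
    simp only [rad, ih]
    rw [← Finset.sum_add_distrib, Finset.sum_div]

theorem rad_sq {X Y : Type*} [AddCommGroup X] [NormedAddCommGroup Y] [InnerProductSpace ℂ Y]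
    (T : X →+ Y) (l : List X) :
    ∀ x, rad l (fun y => ‖T y‖ ^ 2) x = ‖T x‖ ^ 2 + (l.map (fun a => ‖T a‖ ^ 2)).sum := by
  induction l with
  | nil => intro x; simp [rad]
  | cons a l ih =>
    intro x
    simp only [rad, ih, List.map_cons, List.sum_cons, map_add, map_sub]
    rw [@norm_add_sq ℂ, @norm_sub_sq ℂ]
    ring

theorem rad_four {X Y : Type*} [AddCommGroup X] [NormedAddCommGroup Y] [InnerProductSpace ℂ Y]
    (T : X →+ Y) (l : List X) :
    ∀ x, rad l (fun y => ‖T y‖ ^ 4) x ≤ ‖T x‖ ^ 4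
      + 6 * ‖T x‖ ^ 2 * (l.map (fun a => ‖T a‖ ^ 2)).sum
      + 3 * (l.map (fun a => ‖T a‖ ^ 2)).sum ^ 2 := by
  induction l with
  | nil => intro x; simp [rad]
  | cons a l ih =>
    intro x
    have h1 := ih (x + a)
    have h2 := ih (x - a)
    simp only [rad, List.map_cons, List.sum_cons]
    set s := (l.map (fun a => ‖T a‖ ^ 2)).sum
    have e1 : ‖T (x + a)‖ ^ 2 = ‖T x‖ ^ 2 + 2 * RCLike.re ⟪T x, T a⟫ + ‖T a‖ ^ 2 := by
      rw [map_add, @norm_add_sq ℂ]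
    have e2 : ‖T (x - a)‖ ^ 2 = ‖T x‖ ^ 2 - 2 * RCLike.re ⟪T x, T a⟫ + ‖T a‖ ^ 2 := by
      rw [map_sub, @norm_sub_sq ℂ]
    have hr : |RCLike.re ⟪T x, T a⟫| ≤ ‖T x‖ * ‖T a‖ :=
      (RCLike.abs_re_le_norm _).trans (norm_inner_le_norm _ _)
    have hr2 : (RCLike.re ⟪T x, T a⟫) ^ 2 ≤ ‖T x‖ ^ 2 * ‖T a‖ ^ 2 := by
      rw [← mul_pow, ← sq_abs]
      exact pow_le_pow_left₀ (abs_nonneg _) hr 2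
    have f4 : ∀ y : Y, ‖y‖ ^ 4 = (‖y‖ ^ 2) ^ 2 := fun y => by ring
    rw [f4, e1] at h1
    rw [f4, e2] at h2
    rw [f4]
    nlinarith [sq_nonneg (‖T a‖ ^ 2)]

theorem rad_khintchine {X Y : Type*} [AddCommGroup X] [NormedAddCommGroup Y]
    [InnerProductSpace ℂ Y] (T : X →+ Y) (l : List X) :
    √((l.map (fun a => ‖T a‖ ^ 2)).sum) ≤ 2 * rad l (fun y => ‖T y‖) 0 := by
  have h2 := rad_sq T l 0
  have h4 := rad_four T l 0
  set s := (l.map (fun a => ‖T a‖ ^ 2)).sum with hs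
  have hn : 0 ≤ rad l (fun y => ‖T y‖) 0 := by
    have := rad_mono l (φ := fun _ => 0) (ψ := fun y => ‖T y‖) (fun y => norm_nonneg _) 0
    rwa [rad_const] at this
  have hs0 : 0 ≤ s := List.sum_nonneg (by simp only [List.mem_map]; rintro _ ⟨a, -, rfl⟩; positivity)
  set σ := √s with hσ
  have hσs : s = σ ^ 2 := (Real.sq_sqrt hs0).symm
  rcases (Real.sqrt_nonneg s).eq_or_lt with h | h
  · rw [hσ, ← h]; linarith
  change 0 < σ at h
  have key := rad_mono l (φ := fun y => (1 / σ) * ‖T y‖ ^ 2 + (-(4 / 27) / σ ^ 3) * ‖T y‖ ^ 4)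
    (ψ := fun y => ‖T y‖) (fun y => by
      have ht := norm_nonneg (T y)
      set t := ‖T y‖
      have : t - ((1 / σ) * t ^ 2 + (-(4 / 27) / σ ^ 3) * t ^ 4)
          = t * ((t / σ + 3) * (2 * (t / σ) - 3) ^ 2) / 27 := by
        field_simp
        ring
      have h3 : 0 ≤ t * ((t / σ + 3) * (2 * (t / σ) - 3) ^ 2) / 27 := by positivity
      linarith) 0
  rw [rad_lin, h2] at key
  simp only [map_zero, norm_zero] at key h4
  have h5 : (-(4 / 27) / σ ^ 3) * (3 * s ^ 2) ≤ (-(4 / 27) / σ ^ 3) * rad l (fun y => ‖T y‖ ^ 4) 0 := by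
    apply mul_le_mul_of_nonpos_left
    · linarith
    · rw [neg_div]; have : 0 ≤ 4 / 27 / σ ^ 3 := by positivity
      linarith
  have h6 : (-(4 / 27) / σ ^ 3) * (3 * s ^ 2) = - (4 / 9) * σ := by
    rw [hσs]; field_simp; norm_num
  have h7 : 1 / σ * (0 ^ 2 + s) = σ := by rw [hσs]; field_simp; ring
  linarith

/-- little Grothendieck -/
theorem little_groth {X ι : Type*} [NormedAddCommGroup X] [InnerProductSpace ℂ X]
    (s : Finset ι) (x : ι → X) {n : ℕ} (c : ι → Fin n → ℂ) (M C : ℝ) (hM : 0 ≤ M) (hC : 0 ≤ C)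
    (hc : ∀ i ∈ s, ∑ k, ‖c i k‖ ^ 2 ≤ M ^ 2)
    (hx : ∀ h : X, ∑ i ∈ s, ‖⟪x i, h⟫‖ ≤ C * ‖h‖) :
    √(∑ k, ‖∑ i ∈ s, c i k • x i‖ ^ 2) ≤ 2 * M * C := by
  set u : Fin n → X := fun k => ∑ i ∈ s, c i k • x i with hu
  set Q := ∑ k, ‖u k‖ ^ 2 with hQ
  have hQ0 : 0 ≤ Q := by positivity
  let l := List.ofFn u
  have hl : ∀ φ : X → ℝ, (l.map φ).sum = ∑ k, φ (u k) := fun φ => by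
    simp [l, List.map_ofFn, List.sum_ofFn]
  rcases (Real.sqrt_nonneg Q).eq_or_lt with h | h
  · rw [← h]; positivity
  set q := √Q with hq
  have hQq : Q = q ^ 2 := (Real.sq_sqrt hQ0).symm
  have e1 : (Q : ℂ) = ∑ i ∈ s, ∑ k, (starRingEnd ℂ) (c i k) * ⟪x i, u k⟫ := by
    rw [Finset.sum_comm, hQ]
    push_cast
    refine Finset.sum_congr rfl fun k _ => ?_
    have : ⟪u k, u k⟫ = ∑ i ∈ s, (starRingEnd ℂ) (c i k) * ⟪x i, u k⟫ := by
      conv_lhs => rw [hu]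
      simp only []
      rw [sum_inner]
      simp only [inner_smul_left]
      rfl
    rw [← this, inner_self_eq_norm_sq_to_K]; rfl
  have e2 : Q ≤ ∑ i ∈ s, M * √(∑ k, ‖⟪x i, u k⟫‖ ^ 2) := by
    have : Q = ‖(Q : ℂ)‖ := by rw [Complex.norm_real, Real.norm_of_nonneg hQ0]
    rw [this, e1]
    refine (norm_sum_le _ _).trans (Finset.sum_le_sum fun i hi => ?_)
    refine (norm_sum_le _ _).trans ?_
    simp only [norm_mul, RCLike.norm_conj]
    refine (Real.sum_mul_le_sqrt_mul_sqrt _ _ _).trans ?_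
    gcongr
    rw [Real.sqrt_le_left hM]
    exact hc i hi
  have e3 : ∀ i, √(∑ k, ‖⟪x i, u k⟫‖ ^ 2) ≤ 2 * rad l (fun y => ‖⟪x i, y⟫‖) 0 := fun i => by
    have := rad_khintchine ((innerSL ℂ (x i)).toLinearMap.toAddMonoidHom) l
    rw [hl] at this
    exact this
  have e4 : ∑ i ∈ s, rad l (fun y => ‖⟪x i, y⟫‖) 0 ≤ C * q := by
    rw [← rad_sum]
    have h1 := rad_mono l (φ := fun y => ∑ i ∈ s, ‖⟪x i, y⟫‖)
      (ψ := fun y => (C / (2 * q)) * ‖y‖ ^ 2 + (C * q / 2) * 1) (fun y => by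
        refine (hx y).trans ?_
        have : (C / (2 * q)) * ‖y‖ ^ 2 + (C * q / 2) * 1 - C * ‖y‖
          = C * (‖y‖ - q) ^ 2 / (2 * q) := by field_simp; ring
        have h3 : 0 ≤ C * (‖y‖ - q) ^ 2 / (2 * q) := by positivity
        linarith) 0
    refine h1.trans (le_of_eq ?_)
    have h2 := rad_sq (AddMonoidHom.id X) l 0
    rw [hl] at h2
    simp only [AddMonoidHom.id_apply] at h2
    rw [rad_lin l (fun y => ‖y‖ ^ 2) (fun _ => 1), rad_const, h2]
    change C / (2 * q) * (‖(0 : X)‖ ^ 2 + Q) + _ = _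
    rw [norm_zero, hQq]; field_simp; ring
  have e5 : Q ≤ 2 * M * (C * q) := by
    calc Q ≤ _ := e2
      _ ≤ ∑ i ∈ s, M * (2 * rad l (fun y => ‖⟪x i, y⟫‖) 0) :=
        Finset.sum_le_sum fun i _ => mul_le_mul_of_nonneg_left (e3 i) hM
      _ = 2 * M * ∑ i ∈ s, rad l (fun y => ‖⟪x i, y⟫‖) 0 := by
        rw [Finset.mul_sum]; exact Finset.sum_congr rfl fun i _ => by ring
      _ ≤ _ := by gcongr
  rw [hQq] at e5
  nlinarith

theorem sum_abs_le {ι : Type*} (s : Finset ι) (r : ι → ℝ) (D : ℝ)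
    (h : ∀ t ⊆ s, |∑ i ∈ t, r i| ≤ D) : ∑ i ∈ s, |r i| ≤ 2 * D := by
  classical
  rw [← Finset.sum_filter_add_sum_filter_not s (fun i => 0 ≤ r i)]
  have h1 := h _ (Finset.filter_subset (fun i => 0 ≤ r i) s)
  have h2 := h _ (Finset.filter_subset (fun i => ¬ 0 ≤ r i) s)
  have e1 : ∑ i ∈ s with 0 ≤ r i, |r i| = ∑ i ∈ s with 0 ≤ r i, r i :=
    Finset.sum_congr rfl fun i hi => abs_of_nonneg (Finset.mem_filter.1 hi).2
  have e2 : ∑ i ∈ s with ¬ 0 ≤ r i, |r i| = - ∑ i ∈ s with ¬ 0 ≤ r i, r i := by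
    rw [← Finset.sum_neg_distrib]
    exact Finset.sum_congr rfl fun i hi => abs_of_neg (not_le.1 (Finset.mem_filter.1 hi).2)
  rw [e1, e2]
  linarith [le_abs_self (∑ i ∈ s with 0 ≤ r i, r i), neg_abs_le (∑ i ∈ s with ¬ 0 ≤ r i, r i)]

theorem sum_inner_le {X ι : Type*} [NormedAddCommGroup X] [InnerProductSpace ℂ X]
    (s : Finset ι) (x : ι → X) (D : ℝ) (h : ∀ t ⊆ s, ‖∑ i ∈ t, x i‖ ≤ D) (y : X) :
    ∑ i ∈ s, ‖⟪x i, y⟫‖ ≤ 4 * D * ‖y‖ := by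
  have hb : ∀ t ⊆ s, ‖∑ i ∈ t, ⟪x i, y⟫‖ ≤ D * ‖y‖ := fun t ht => by
    rw [← sum_inner]
    exact (norm_inner_le_norm _ _).trans (mul_le_mul_of_nonneg_right (h t ht) (norm_nonneg _))
  have h1 := sum_abs_le s (fun i => (⟪x i, y⟫).re) (D * ‖y‖) fun t ht => by
    rw [← Complex.re_sum]; exact (Complex.abs_re_le_norm _).trans (hb t ht)
  have h2 := sum_abs_le s (fun i => (⟪x i, y⟫).im) (D * ‖y‖) fun t ht => by
    rw [← Complex.im_sum]; exact (Complex.abs_im_le_norm _).trans (hb t ht)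
  calc _ ≤ ∑ i ∈ s, (|(⟪x i, y⟫).re| + |(⟪x i, y⟫).im|) :=
        Finset.sum_le_sum fun i _ => Complex.norm_le_abs_re_add_abs_im _
    _ ≤ _ := by rw [Finset.sum_add_distrib]; linarith

namespace HilbertTensor

theorem norm_tmul (tp : HilbertTensor H K E) (f : H) (g : K) : ‖tp.tmul f g‖ = ‖f‖ * ‖g‖ := by
  have h := tp.inner_tmul f f g g
  simp only [inner_self_eq_norm_sq_to_K] at h
  have h2 : ‖tp.tmul f g‖ ^ 2 = (‖f‖ * ‖g‖) ^ 2 := by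
    rw [mul_pow]; exact_mod_cast h
  exact (pow_left_inj₀ (norm_nonneg _) (by positivity) two_ne_zero).1 h2

theorem ext_tmul (tp : HilbertTensor H K E) {x y : E}
    (h : ∀ f g, ⟪tp.tmul f g, x⟫ = ⟪tp.tmul f g, y⟫) : x = y := by
  refine tp.dense_span.eq_of_inner_right (𝕜 := ℂ) fun z hz => ?_
  induction hz using Submodule.span_induction with
  | mem z hz => obtain ⟨p, rfl⟩ := hz; exact h _ _
  | zero => simp
  | add a b _ _ ha hb => rw [inner_add_left, inner_add_left, ha, hb]
  | smul c a _ ha => rw [inner_smul_left, inner_smul_left, ha]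

/-- the bilinear map -/
def bil (tp : HilbertTensor H K E) : H →ₗ[ℂ] K →ₗ[ℂ] E :=
  LinearMap.mk₂ ℂ tp.tmul
    (fun a b c => tp.ext_tmul fun f g => by
      simp only [inner_add_right, inner_tmul]; ring)
    (fun a b c => tp.ext_tmul fun f g => by
      simp only [inner_smul_right, inner_tmul]; ring)
    (fun a b c => tp.ext_tmul fun f g => by
      simp only [inner_add_right, inner_tmul]; ring)
    (fun a b c => tp.ext_tmul fun f g => by
      simp only [inner_smul_right, inner_tmul]; ring)

theorem bil_apply (tp : HilbertTensor H K E) (f : H) (g : K) : tp.bil f g = tp.tmul f g := rfl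

/-- `g ↦ f ⊗ g` -/
def rightL (tp : HilbertTensor H K E) (f : H) : K →L[ℂ] E :=
  (tp.bil f).mkContinuous ‖f‖ fun g => (tp.norm_tmul f g).le

/-- `f ↦ f ⊗ g` -/
def leftL (tp : HilbertTensor H K E) (g : K) : H →L[ℂ] E :=
  (tp.bil.flip g).mkContinuous ‖g‖ fun f => by
    rw [mul_comm]; exact (tp.norm_tmul f g).le

theorem rightL_apply (tp : HilbertTensor H K E) (f : H) (g : K) :
    tp.rightL f g = tp.tmul f g := rfl

theorem leftL_apply (tp : HilbertTensor H K E) (f : H) (g : K) :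
    tp.leftL g f = tp.tmul f g := rfl

theorem adj_leftL [CompleteSpace H] [CompleteSpace E] (tp : HilbertTensor H K E) (f : H) (g : K) :
    ContinuousLinearMap.adjoint (tp.leftL g) (tp.tmul f g) = ⟪g, g⟫ • f := by
  refine ext_inner_left ℂ fun h => ?_
  rw [ContinuousLinearMap.adjoint_inner_right, leftL_apply, inner_tmul, inner_smul_right, mul_comm]

theorem adj_rightL [CompleteSpace K] [CompleteSpace E] (tp : HilbertTensor H K E) (f : H) (g : K) :
    ContinuousLinearMap.adjoint (tp.rightL f) (tp.tmul f g) = ⟪f, f⟫ • g := by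
  refine ext_inner_left ℂ fun h => ?_
  rw [ContinuousLinearMap.adjoint_inner_right, rightL_apply, inner_tmul, inner_smul_right]

theorem adj_tensor [CompleteSpace H] [CompleteSpace K] [CompleteSpace E]
    [CompleteSpace H'] [CompleteSpace K'] [CompleteSpace E']
    (tp : HilbertTensor H K E) (tp' : HilbertTensor H' K' E')
    (Q : H →L[ℂ] H') (T : K →L[ℂ] K') (R : E →L[ℂ] E') (h : IsTensorOp tp tp' Q T R)
    (a : H') (b : K') :
    ContinuousLinearMap.adjoint R (tp'.tmul a b)
      = tp.tmul (ContinuousLinearMap.adjoint Q a) (ContinuousLinearMap.adjoint T b) := by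
  refine tp.ext_tmul fun f g => ?_
  rw [ContinuousLinearMap.adjoint_inner_right, h f g, inner_tmul, inner_tmul,
    ContinuousLinearMap.adjoint_inner_right, ContinuousLinearMap.adjoint_inner_right]

theorem proj_tensor (tp : HilbertTensor H K E) (V : Submodule ℂ H) (W : Submodule ℂ K)
    [HasOrthogonalProjection V] [HasOrthogonalProjection W]
    [HasOrthogonalProjection (tsub tp V W)] (f : H) (g : K) :
    projL (tsub tp V W) (tp.tmul f g) = tp.tmul (projL V f) (projL W g) := by
  change (tsub tp V W).starProjection _ = tp.tmul (V.starProjection f) (W.starProjection g)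
  refine eq_starProjection_of_mem_orthogonal ?_ ?_
  · exact Submodule.le_topologicalClosure _ (Submodule.subset_span
      ⟨_, V.starProjection_apply_mem f, _, W.starProjection_apply_mem g, rfl⟩)
  · rw [tsub, Submodule.orthogonal_closure, Submodule.mem_orthogonal]
    intro z hz
    induction hz using Submodule.span_induction with
    | mem z hz =>
      obtain ⟨a, ha, b, hb, rfl⟩ := hz
      have h1 : ⟪a, V.starProjection f⟫ = ⟪a, f⟫ := by
        rw [← V.inner_starProjection_left_eq_right, V.starProjection_eq_self_iff.2 ha]
      have h2 : ⟪b, W.starProjection g⟫ = ⟪b, g⟫ := by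
        rw [← W.inner_starProjection_left_eq_right, W.starProjection_eq_self_iff.2 hb]
      rw [inner_sub_right, inner_tmul, inner_tmul, h1, h2, sub_self]
    | zero => simp
    | add a b _ _ ha hb => rw [inner_add_left, ha, hb, add_zero]
    | smul c a _ ha => rw [inner_smul_left, ha, mul_zero]

theorem norm_sum_tmul_le {ι : Type*} (tp : HilbertTensor H K E) (s : Finset ι) (x : ι → H)
    (z : ι → K) (M D : ℝ) (hz : ∀ i ∈ s, ‖z i‖ ≤ M) (hM : 0 ≤ M) (hD : 0 ≤ D)
    (hx : ∀ t ⊆ s, ‖∑ i ∈ t, x i‖ ≤ D) :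
    ‖∑ i ∈ s, tp.tmul (x i) (z i)‖ ≤ 8 * M * D := by
  classical
  let Z : Submodule ℂ K := Submodule.span ℂ (s.image z : Set K)
  have hZ : ∀ i ∈ s, z i ∈ Z := fun i hi =>
    Submodule.subset_span (by exact_mod_cast Finset.mem_image_of_mem z hi)
  let b := stdOrthonormalBasis ℂ Z
  let c : ι → Fin (Module.finrank ℂ Z) → ℂ := fun i k => ⟪((b k : Z) : K), z i⟫
  have hc : ∀ i ∈ s, ∑ k, c i k • ((b k : Z) : K) = z i := fun i hi => by
    have := congrArg (Subtype.val) (b.sum_repr' ⟨z i, hZ i hi⟩)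
    simpa using this
  have hc2 : ∀ i ∈ s, ∑ k, ‖c i k‖ ^ 2 ≤ M ^ 2 := fun i hi => by
    have h1 := b.sum_sq_norm_inner_right ⟨z i, hZ i hi⟩
    refine le_trans (le_of_eq (h1.trans ?_)) (pow_le_pow_left₀ (norm_nonneg _) (hz i hi) 2)
    rfl
  have hg := little_groth s x c M (4 * D) hM (by positivity) hc2 (sum_inner_le s x D hx)
  have e : ∑ i ∈ s, tp.tmul (x i) (z i)
      = ∑ k, tp.tmul (∑ i ∈ s, c i k • x i) ((b k : Z) : K) := by
    have : ∀ i ∈ s, tp.tmul (x i) (z i) = ∑ k, tp.bil (c i k • x i) ((b k : Z) : K) := by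
      intro i hi
      conv_lhs => rw [← hc i hi]
      rw [← bil_apply, map_sum]
      simp
    rw [Finset.sum_congr rfl this, Finset.sum_comm]
    refine Finset.sum_congr rfl fun k _ => ?_
    rw [← bil_apply, map_sum, LinearMap.sum_apply]
  have e2 : ‖∑ i ∈ s, tp.tmul (x i) (z i)‖ ^ 2 = ∑ k, ‖∑ i ∈ s, c i k • x i‖ ^ 2 := by
    rw [e]
    have ho : ∀ k l, ⟪((b k : Z) : K), ((b l : Z) : K)⟫ = if k = l then 1 else 0 :=
      orthonormal_iff_ite.1 b.orthonormal
    have h3 : ∀ y : E, ((‖y‖ ^ 2 : ℝ) : ℂ) = ⟪y, y⟫ := fun y => by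
      rw [inner_self_eq_norm_sq_to_K]; norm_cast
    have h4 : ∀ y : H, ((‖y‖ ^ 2 : ℝ) : ℂ) = ⟪y, y⟫ := fun y => by
      rw [inner_self_eq_norm_sq_to_K]; norm_cast
    apply Complex.ofReal_injective
    rw [h3, Complex.ofReal_sum, sum_inner]
    refine Finset.sum_congr rfl fun k _ => ?_
    rw [inner_sum, h4]
    simp only [inner_tmul, ho, mul_ite, mul_one, mul_zero, Finset.sum_ite_eq, Finset.mem_univ,
      if_true]
  rw [← e2, Real.sqrt_sq (norm_nonneg _)] at hg
  linarith

theorem bdd_of_summable {ι X : Type*} [NormedAddCommGroup X] [CompleteSpace X] {y : ι → X}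
    (hy : Summable y) : ∃ M > 0, ∀ t : Finset ι, ‖∑ i ∈ t, y i‖ ≤ M := by
  classical
  obtain ⟨s, hs⟩ := summable_iff_vanishing_norm.1 hy 1 one_pos
  refine ⟨∑ i ∈ s, ‖y i‖ + 1, by positivity, fun t => ?_⟩
  rw [← Finset.sum_inter_add_sum_sdiff t s]
  refine (norm_add_le _ _).trans (add_le_add ?_ (hs _ Finset.sdiff_disjoint).le)
  exact (norm_sum_le _ _).trans (Finset.sum_le_sum_of_subset_of_nonneg Finset.inter_subset_right
    fun _ _ _ => norm_nonneg _)

theorem sum_pairs {ι κ : Type*} [DecidableEq ι] [DecidableEq κ] (tp : HilbertTensor H K E)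
    (x : ι → H) (y : κ → K) (F : Finset (ι × κ)) :
    ∑ p ∈ F, tp.tmul (x p.1) (y p.2) = ∑ i ∈ F.image Prod.fst,
      tp.tmul (x i) (∑ j ∈ (F.filter fun p => p.1 = i).image Prod.snd, y j) := by
  rw [← Finset.sum_fiberwise_of_maps_to (g := Prod.fst)
    (fun p hp => Finset.mem_image_of_mem Prod.fst hp)]
  refine Finset.sum_congr rfl fun i _ => ?_
  rw [← rightL_apply, map_sum, Finset.sum_image]
  · refine Finset.sum_congr rfl fun p hp => ?_
    rw [(Finset.mem_filter.1 hp).2]; rfl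
  · intro p hp q hq h
    simp only [Finset.coe_filter, Set.mem_ofPred_eq] at hp hq
    exact Prod.ext (hp.2.trans hq.2.symm) h

theorem summable_tmul {ι κ : Type*} [CompleteSpace H] [CompleteSpace K] [CompleteSpace E]
    (tp : HilbertTensor H K E) {x : ι → H} {y : κ → K} (hx : Summable x) (hy : Summable y) :
    Summable fun p : ι × κ => tp.tmul (x p.1) (y p.2) := by
  classical
  rw [summable_iff_vanishing_norm]
  intro ε hε
  obtain ⟨M, hM, hyM⟩ := bdd_of_summable hy
  obtain ⟨I, hI⟩ := summable_iff_vanishing_norm.1 hx (ε / (16 * M)) (by positivity)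
  set A := ∑ i ∈ I, ‖x i‖ with hA
  have hA0 : 0 ≤ A := by positivity
  obtain ⟨J, hJ⟩ := summable_iff_vanishing_norm.1 hy (ε / (4 * (A + 1))) (by positivity)
  refine ⟨I ×ˢ J, fun F hF => ?_⟩
  rw [← Finset.sum_filter_add_sum_filter_not F (fun p => p.1 ∈ I)]
  have h1 : ‖∑ p ∈ F with p.1 ∈ I, tp.tmul (x p.1) (y p.2)‖ ≤ ε / 4 := by
    rw [sum_pairs]
    refine (norm_sum_le _ _).trans ?_
    have hb : ∀ i ∈ (F.filter fun p => p.1 ∈ I).image Prod.fst,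
        ‖tp.tmul (x i) (∑ j ∈ ((F.filter fun p => p.1 ∈ I).filter fun p => p.1 = i).image Prod.snd,
          y j)‖ ≤ ‖x i‖ * (ε / (4 * (A + 1))) := by
      intro i hi
      rw [norm_tmul]
      refine mul_le_mul_of_nonneg_left (hJ _ ?_).le (norm_nonneg _)
      rw [Finset.disjoint_left]
      intro j hj hjJ
      simp only [Finset.mem_image, Finset.mem_filter] at hj
      obtain ⟨p, ⟨⟨hpF, hpI⟩, -⟩, rfl⟩ := hj
      exact Finset.disjoint_left.1 hF hpF (Finset.mem_product.2 ⟨hpI, hjJ⟩)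
    refine (Finset.sum_le_sum hb).trans ?_
    rw [← Finset.sum_mul]
    have hsub : (F.filter fun p => p.1 ∈ I).image Prod.fst ⊆ I := by
      intro i hi
      simp only [Finset.mem_image, Finset.mem_filter] at hi
      obtain ⟨p, ⟨_, h⟩, rfl⟩ := hi
      exact h
    have hle : ∑ i ∈ (F.filter fun p => p.1 ∈ I).image Prod.fst, ‖x i‖ ≤ A :=
      Finset.sum_le_sum_of_subset_of_nonneg hsub fun _ _ _ => norm_nonneg _
    calc _ ≤ (A + 1) * (ε / (4 * (A + 1))) := by gcongr; linarith
      _ = ε / 4 := by field_simp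
  have h2 : ‖∑ p ∈ F with ¬ p.1 ∈ I, tp.tmul (x p.1) (y p.2)‖ ≤ ε / 2 := by
    rw [sum_pairs]
    refine (tp.norm_sum_tmul_le _ _ _ M (ε / (16 * M)) (fun i _ => hyM _) hM.le (by positivity)
      fun t ht => (hI t ?_).le).trans (le_of_eq ?_)
    · rw [Finset.disjoint_left]
      intro i hi hiI
      have := ht hi
      simp only [Finset.mem_image, Finset.mem_filter] at this
      obtain ⟨p, ⟨_, h⟩, rfl⟩ := this
      exact h hiI
    · field_simp; norm_num
  refine (norm_add_le _ _).trans_lt ?_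
  linarith

theorem tsum_tmul {ι κ : Type*} [CompleteSpace H] [CompleteSpace K] [CompleteSpace E]
    (tp : HilbertTensor H K E) (x : ι → H) (y : κ → K) :
    ∑' p : ι × κ, tp.tmul (x p.1) (y p.2) = tp.tmul (∑' i, x i) (∑' j, y j) := by
  have z1 : ∀ g, tp.tmul 0 g = 0 := fun g => map_zero (tp.leftL g)
  have z2 : ∀ f, tp.tmul f 0 = 0 := fun f => map_zero (tp.rightL f)
  by_cases hx : Summable x
  · by_cases hy : Summable y
    · rw [(tp.summable_tmul hx hy).tsum_prod, ← leftL_apply, (tp.leftL _).map_tsum hx]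
      refine tsum_congr fun i => ?_
      rw [leftL_apply, ← rightL_apply, (tp.rightL _).map_tsum hy]
      rfl
    · rw [tsum_eq_zero_of_not_summable hy, z2]
      by_cases h0 : ∀ i, x i = 0
      · simp [h0, z1]
      · push Not at h0
        obtain ⟨i, hi⟩ := h0
        refine tsum_eq_zero_of_not_summable fun hs => hy ?_
        have h1 := hs.comp_injective (i := fun j => (i, j)) (fun a b h => (Prod.mk.inj h).2)
        have h2 := (ContinuousLinearMap.adjoint (tp.rightL (x i))).summable h1
        simp only [Function.comp_def, adj_rightL] at h2
        simpa only [smul_smul, inv_mul_cancel₀ (inner_self_ne_zero (𝕜 := ℂ).2 hi), one_smul]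
          using h2.const_smul (⟪x i, x i⟫)⁻¹
  · rw [tsum_eq_zero_of_not_summable hx, z1]
    by_cases h0 : ∀ i, y i = 0
    · simp [h0, z2]
    · push Not at h0
      obtain ⟨j, hj⟩ := h0
      refine tsum_eq_zero_of_not_summable fun hs => hx ?_
      have h1 := hs.comp_injective (i := fun i => (i, j)) (fun a b h => (Prod.mk.inj h).1)
      have h2 := (ContinuousLinearMap.adjoint (tp.leftL (y j))).summable h1
      simp only [Function.comp_def, adj_leftL] at h2
      simpa only [smul_smul, inv_mul_cancel₀ (inner_self_ne_zero (𝕜 := ℂ).2 hj), one_smul]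
          using h2.const_smul (⟪y j, y j⟫)⁻¹

end HilbertTensor

/-- the frame operator of the pair of tensor product g-fusion Bessel
sequences satisfies `S = S_{ΛΛ'} ⊗ S_{ΓΓ'}`. -/
theorem stmt_17 {ι κ : Type*} [CompleteSpace H] [CompleteSpace K] [CompleteSpace E]
    {Hi : ι → Type*} [∀ i, NormedAddCommGroup (Hi i)] [∀ i, InnerProductSpace ℂ (Hi i)]
    [∀ i, CompleteSpace (Hi i)]
    {Kj : κ → Type*} [∀ j, NormedAddCommGroup (Kj j)] [∀ j, InnerProductSpace ℂ (Kj j)]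
    [∀ j, CompleteSpace (Kj j)]
    {Eij : ι → κ → Type*} [∀ i j, NormedAddCommGroup (Eij i j)]
    [∀ i j, InnerProductSpace ℂ (Eij i j)] [∀ i j, CompleteSpace (Eij i j)]
    (tp : HilbertTensor H K E) (tpij : ∀ i j, HilbertTensor (Hi i) (Kj j) (Eij i j))
    (V V' : ι → Submodule ℂ H) [∀ i, HasOrthogonalProjection (V i)]
    [∀ i, HasOrthogonalProjection (V' i)]
    (W W' : κ → Submodule ℂ K) [∀ j, HasOrthogonalProjection (W j)]
    [∀ j, HasOrthogonalProjection (W' j)]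
    [∀ i j, HasOrthogonalProjection (tsub tp (V i) (W j))]
    [∀ i j, HasOrthogonalProjection (tsub tp (V' i) (W' j))]
    (Λ Λ' : ∀ i, H →L[ℂ] Hi i) (Γ Γ' : ∀ j, K →L[ℂ] Kj j)
    (v v' : ι → ℝ) (w w' : κ → ℝ) (B₀ D₀ E₀ F₀ : ℝ)
    (hΛ : IsGFusionBessel V Λ v B₀) (hΛ' : IsGFusionBessel V' Λ' v' D₀)
    (hΓ : IsGFusionBessel W Γ w E₀) (hΓ' : IsGFusionBessel W' Γ' w' F₀)
    (Rij R'ij : ∀ i j, E →L[ℂ] Eij i j)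
    (hRij : ∀ i j, IsTensorOp tp (tpij i j) (Λ i) (Γ j) (Rij i j))
    (hR'ij : ∀ i j, IsTensorOp tp (tpij i j) (Λ' i) (Γ' j) (R'ij i j))
    (SΛΛ' : H →L[ℂ] H) (SΓΓ' : K →L[ℂ] K) (S : E →L[ℂ] E)
    (hSΛΛ' : ∀ f : H, SΛΛ' f = ∑' i, (v i * v' i) •
      projL (V i) (ContinuousLinearMap.adjoint (Λ i) (Λ' i (projL (V' i) f))))
    (hSΓΓ' : ∀ g : K, SΓΓ' g = ∑' j, (w j * w' j) •
      projL (W j) (ContinuousLinearMap.adjoint (Γ j) (Γ' j (projL (W' j) g))))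
    (hSdef : ∀ x : E, S x = ∑' p : ι × κ, (v p.1 * w p.2 * (v' p.1 * w' p.2)) •
      projL (tsub tp (V p.1) (W p.2))
        (ContinuousLinearMap.adjoint (Rij p.1 p.2)
          (R'ij p.1 p.2 (projL (tsub tp (V' p.1) (W' p.2)) x)))) :
    IsTensorOp tp tp SΛΛ' SΓΓ' S := by
  intro f g
  rw [hSdef, hSΛΛ', hSΓΓ', ← tp.tsum_tmul]
  refine tsum_congr fun p => ?_
  rw [tp.proj_tensor, hR'ij, tp.adj_tensor _ _ _ _ (hRij _ _), tp.proj_tensor]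
  simp only [← Complex.coe_smul, ← tp.bil_apply, map_smul, LinearMap.smul_apply, smul_smul]
  congr 1
  push_cast
  ring
end
end
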